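/- arXiv:1607.08463 — 3 statements merged into one kernel-verified Lean document; each statement's English description precedes it below -/
import Mathlib

section
/- Let p₀ ∈ ℝ² ∖ {(0,0)}, set c := ½(λ₁ (p₀¹)² + λ₂ (p₀²)²) and A := 2πc/√(λ₁λ₂) (the Euclidean area enclosed by the ellipse { p ∈ ℝ² : ½(λ₁ p₁² + λ₂ p₂²) = c }, which passes through p₀). Then every closed locally Lipschitz curve γ : [a,b] → ℝ² with γ(a) = γ(b) = p₀ and 𝒜(γ) = A satisfies E_H(γ) ≥ (λ₁ + λ₂) A, and any positively oriented locally Lipschitz parametrization of the ellipse attains equality; that is, the ellipse minimizes E_H among all closed curves through p₀ enclosing Euclidean area A, and the minimal value equals (λ₁ + λ₂) A. -/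
open MeasureTheory Set Filter Topology
open scoped ENNReal

noncomputable section

/-- The Euclidean norm of a vector in `ℝ × ℝ`. -/
def enorm2 (v : ℝ × ℝ) : ℝ := Real.sqrt (v.1 ^ 2 + v.2 ^ 2)

/-- The degenerate length `E(γ) = ∫ₐᵇ F(γ(t)) |γ'(t)| dt` of a planar curve. -/
def degLen (F : ℝ × ℝ → ℝ) (a b : ℝ) (γ : ℝ → ℝ × ℝ) : ℝ :=
  ∫ t in a..b, F (γ t) * enorm2 (deriv γ t)

/-- The signed area `𝒜(γ) = ∫ₐᵇ γ¹(t) (γ²)'(t) dt` of a planar curve. -/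
def sArea (a b : ℝ) (γ : ℝ → ℝ × ℝ) : ℝ :=
  ∫ t in a..b, (γ t).1 * deriv (fun s => (γ s).2) t

/-- A locally Lipschitz curve on `[a,b]` joining `p` to `q`. -/
def IsCurve (a b : ℝ) (γ : ℝ → ℝ × ℝ) (p q : ℝ × ℝ) : Prop :=
  a ≤ b ∧ LocallyLipschitz γ ∧ γ a = p ∧ γ b = q

/-- The homogeneous conformal factor `F_H(p) = √(λ₁²p₁² + λ₂²p₂²)`. -/
def FH (l1 l2 : ℝ) (p : ℝ × ℝ) : ℝ := Real.sqrt (l1 ^ 2 * p.1 ^ 2 + l2 ^ 2 * p.2 ^ 2)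

/-!
The `1`-form `ω = λ₁ x dy - λ₂ y dx` is a calibration. By Lagrange's identity
`(F_H(p) |v|)² = ω_p(v)² + (λ₁ p₁ v₁ + λ₂ p₂ v₂)²`, so `|ω|` is at most the integrand of `E_H`, with
equality exactly in the directions tangent to the ellipses `λ₁ x² + λ₂ y² = const`. Integrating by
parts, `∫ ω = (λ₁ + λ₂) 𝒜` over every closed curve, which gives the lower bound. On a simple
parametrization of an ellipse the bound is attained as soon as `ω(γ')` has constant sign. To see
this, map the ellipse to a circle by `(x, y) ↦ √λ₁ x + i √λ₂ y` and lift the curve to its angle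
`θ(t) = ∫ Im (z' / z)`: the sign of `ω(γ')` is that of `θ'`, and `θ` is continuous and injective,
hence monotone.
-/

section LocallyLipschitz

lemma absolutelyContinuousOnInterval_of_locallyLipschitz {X : Type*} [PseudoMetricSpace X]
    {γ : ℝ → X} (hγ : LocallyLipschitz γ) (a b : ℝ) : AbsolutelyContinuousOnInterval γ a b := by
  obtain ⟨K, hK⟩ := (hγ.locallyLipschitzOn (s := uIcc a b)).exists_lipschitzOnWith_of_compact
    isCompact_uIcc
  exact hK.absolutelyContinuousOnInterval

lemma absolutelyContinuousOnInterval_comp_of_lipschitzWith {X Y : Type*} [PseudoMetricSpace X]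
    [PseudoMetricSpace Y] {K : NNReal} {φ : X → Y} (hφ : LipschitzWith K φ) {f : ℝ → X} {a b : ℝ}
    (hf : AbsolutelyContinuousOnInterval f a b) :
    AbsolutelyContinuousOnInterval (fun t => φ (f t)) a b := by
  refine squeeze_zero (fun E => Finset.sum_nonneg fun i _ => dist_nonneg) (fun E => ?_)
    (by simpa using Tendsto.const_mul (K : ℝ) hf)
  rw [Finset.mul_sum]
  gcongr
  exact hφ.dist_le_mul _ _

variable {E : Type*} [NormedAddCommGroup E] [NormedSpace ℝ E] {γ : ℝ → E}

lemma ae_differentiableAt_of_locallyLipschitz [FiniteDimensional ℝ E] (hγ : LocallyLipschitz γ) :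
    ∀ᵐ t, DifferentiableAt ℝ γ t := by
  have hbv : LocallyBoundedVariationOn γ univ := fun a b _ _ =>
    (absolutelyContinuousOnInterval_of_locallyLipschitz hγ a b).boundedVariationOn.mono
      (inter_subset_right.trans Icc_subset_uIcc)
  exact hbv.ae_differentiableAt

lemma intervalIntegrable_deriv_of_locallyLipschitz [CompleteSpace E] (hγ : LocallyLipschitz γ)
    (a b : ℝ) : IntervalIntegrable (deriv γ) volume a b := by
  obtain ⟨K, hK⟩ := (hγ.locallyLipschitzOn
    (s := Icc (min a b - 1) (max a b + 1))).exists_lipschitzOnWith_of_compact isCompact_Icc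
  refine (intervalIntegrable_const (c := (K : ℝ))).mono_fun
    (stronglyMeasurable_deriv γ).aestronglyMeasurable ?_
  refine ae_restrict_of_forall_mem measurableSet_uIoc fun t ht => ?_
  have hnhds : Icc (min a b - 1) (max a b + 1) ∈ 𝓝 t :=
    Icc_mem_nhds (by linarith [ht.1]) (by linarith [ht.2])
  simpa using norm_deriv_le_of_lipschitzOn hnhds hK

end LocallyLipschitz

lemma integral_abs_eq_abs_integral_of_ae_nonneg_or_nonpos {α : Type*} [MeasurableSpace α]
    {μ : Measure α} {f : α → ℝ} (hf : (∀ᵐ x ∂μ, 0 ≤ f x) ∨ ∀ᵐ x ∂μ, f x ≤ 0) :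
    ∫ x, |f x| ∂μ = |∫ x, f x ∂μ| := by
  rcases hf with hf | hf
  · rw [abs_of_nonneg (integral_nonneg_of_ae hf)]
    exact integral_congr_ae (hf.mono fun x hx => abs_of_nonneg hx)
  · rw [abs_of_nonpos (integral_nonpos_of_ae hf), ← integral_neg]
    exact integral_congr_ae (hf.mono fun x hx => abs_of_nonpos hx)

section Circle

lemma inner_deriv_eq_zero_of_eventually_norm_eq {E : Type*} [NormedAddCommGroup E]
    [InnerProductSpace ℝ E] {γ : ℝ → E} {t r : ℝ} (hγ : DifferentiableAt ℝ γ t)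
    (hr : ∀ᶠ s in 𝓝 t, ‖γ s‖ = r) : inner ℝ (γ t) (deriv γ t) = 0 := by
  have hconst : HasDerivAt (fun s => ‖γ s‖ ^ 2) 0 t :=
    (hasDerivAt_const t (r ^ 2)).congr_of_eventuallyEq (hr.mono fun s hs => by simp only [hs])
  linarith [hγ.hasDerivAt.norm_sq.unique hconst]

lemma re_div_eq_zero_of_inner_eq_zero {z v : ℂ} (h : inner ℝ z v = 0) : (v / z).re = 0 := by
  rw [Complex.inner] at h
  rw [Complex.div_re, ← add_div]
  simp only [Complex.mul_re, Complex.conj_re, Complex.conj_im] at h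
  rw [show v.re * z.re + v.im * z.im = 0 by linarith, zero_div]

lemma lipschitzWith_exp_ofReal_mul_I :
    LipschitzWith 1 (fun x : ℝ => Complex.exp (x * Complex.I)) := by
  have hderiv (x : ℝ) : HasDerivAt (fun x : ℝ => Complex.exp (x * Complex.I))
      (Complex.exp (x * Complex.I) * (1 * Complex.I)) x :=
    ((Complex.ofRealCLM.hasDerivAt (x := x)).mul_const Complex.I).cexp
  refine lipschitzWith_of_nnnorm_deriv_le (fun x => (hderiv x).differentiableAt) fun x => ?_
  rw [(hderiv x).deriv, ← NNReal.coe_le_coe]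
  simp

variable {z : ℝ → ℂ} {a b r : ℝ}

lemma eqOn_mul_exp_integral_of_ae_hasDerivAt {w : ℝ → ℝ}
    (hz : AbsolutelyContinuousOnInterval z a b) (hw : IntervalIntegrable w volume a b)
    (hderiv : ∀ᵐ t, t ∈ uIcc a b → HasDerivAt z (w t * Complex.I * z t) t) :
    EqOn z (fun t => z a * Complex.exp ((∫ s in a..t, w s : ℝ) * Complex.I)) (uIcc a b) := by
  set θ : ℝ → ℝ := fun t => ∫ s in a..t, w s with hθ
  have hrot : AbsolutelyContinuousOnInterval
      (fun t => Complex.exp ((-θ t : ℝ) * Complex.I) • z t) a b :=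
    (absolutelyContinuousOnInterval_comp_of_lipschitzWith lipschitzWith_exp_ofReal_mul_I
      (hw.absolutelyContinuousOnInterval_intervalIntegral left_mem_uIcc).fun_neg).fun_smul hz
  obtain ⟨C, hC⟩ := hrot.const_of_ae_hasDerivAt_zero <| by
    filter_upwards [hderiv, hw.ae_hasDerivAt_integral] with t hzt hθt ht
    have hθ' : HasDerivAt θ (w t) t := hθt ht a left_mem_uIcc
    refine (((hθ'.neg.ofReal_comp.mul_const Complex.I).cexp).smul (hzt ht)).congr_deriv ?_
    simp only [smul_eq_mul]
    push_cast
    ring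
  intro t ht
  have hCa : C = z a := by simpa [hθ] using (hC a left_mem_uIcc).symm
  have hCt : Complex.exp ((-θ t : ℝ) * Complex.I) * z t = z a := (hC t ht).trans hCa
  simp only [← hCt]
  rw [mul_right_comm, ← Complex.exp_add]
  simp [hθ]

lemma hasDerivAt_of_eventually_norm_eq {t : ℝ} (hz : DifferentiableAt ℝ z t)
    (hz0 : z t ≠ 0) (hr : ∀ᶠ s in 𝓝 t, ‖z s‖ = r) :
    HasDerivAt z ((logDeriv z t).im * Complex.I * z t) t := by
  have hre : (logDeriv z t).re = 0 :=
    re_div_eq_zero_of_inner_eq_zero (inner_deriv_eq_zero_of_eventually_norm_eq hz hr)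
  have him : ((logDeriv z t).im * Complex.I : ℂ) = logDeriv z t := by
    simpa [hre] using Complex.re_add_im (logDeriv z t)
  rw [him, logDeriv_apply, div_mul_cancel₀ _ hz0]
  exact hz.hasDerivAt

lemma intervalIntegrable_im_logDeriv (hz : LocallyLipschitz z)
    (hz0 : ∀ t ∈ uIcc a b, z t ≠ 0) :
    IntervalIntegrable (fun t => (logDeriv z t).im) volume a b := by
  have hlog : IntervalIntegrable (logDeriv z) volume a b :=
    (intervalIntegrable_deriv_of_locallyLipschitz hz a b).mul_continuousOn
      (hz.continuous.continuousOn.inv₀ hz0)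
  exact ⟨hlog.1.im, hlog.2.im⟩

lemma eqOn_mul_exp_integral_im_logDeriv (hab : a ≤ b) (hz : LocallyLipschitz z) (hr : r ≠ 0)
    (hnorm : ∀ t ∈ Icc a b, ‖z t‖ = r) :
    EqOn z (fun t => z a * Complex.exp ((∫ s in a..t, (logDeriv z s).im : ℝ) * Complex.I))
      (Icc a b) := by
  have hz0 : ∀ t ∈ Icc a b, z t ≠ 0 := fun t ht => norm_ne_zero_iff.1 (hnorm t ht ▸ hr)
  rw [← uIcc_of_le hab] at hz0 ⊢
  refine eqOn_mul_exp_integral_of_ae_hasDerivAt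
    (absolutelyContinuousOnInterval_of_locallyLipschitz hz a b)
    (intervalIntegrable_im_logDeriv hz hz0) ?_
  filter_upwards [ae_differentiableAt_of_locallyLipschitz hz,
    (Ioo_ae_eq_Icc (μ := volume) (a := a) (b := b)).mem_iff] with t hzt hIoo ht
  have ht' : t ∈ Ioo a b := hIoo.2 (uIcc_of_le hab ▸ ht)
  exact hasDerivAt_of_eventually_norm_eq hzt (hz0 t ht)
    (eventually_of_mem (Icc_mem_nhds ht'.1 ht'.2) hnorm)

lemma ae_im_logDeriv_nonneg_or_nonpos_of_injOn (hz : LocallyLipschitz z) (hr : r ≠ 0)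
    (hnorm : ∀ t ∈ Icc a b, ‖z t‖ = r) (hinj : InjOn z (Ioo a b)) :
    (∀ᵐ t ∂volume.restrict (Ioo a b), 0 ≤ (logDeriv z t).im) ∨
      ∀ᵐ t ∂volume.restrict (Ioo a b), (logDeriv z t).im ≤ 0 := by
  rcases le_or_gt b a with hba | hab
  · simp [Ioo_eq_empty_of_le hba]
  set θ : ℝ → ℝ := fun t => ∫ s in a..t, (logDeriv z s).im
  have hz0 : ∀ t ∈ uIcc a b, z t ≠ 0 := fun t ht =>
    norm_ne_zero_iff.1 (hnorm t (uIcc_of_le hab.le ▸ ht) ▸ hr)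
  have hint := intervalIntegrable_im_logDeriv hz hz0
  have hlift := eqOn_mul_exp_integral_im_logDeriv hab.le hz hr hnorm
  have hθcont : ContinuousOn θ (Ioo a b) :=
    (hint.absolutelyContinuousOnInterval_intervalIntegral left_mem_uIcc).continuousOn.mono
      (Ioo_subset_Icc_self.trans Icc_subset_uIcc)
  have hθinj : InjOn θ (Ioo a b) := fun s hs t ht hst => hinj hs ht <| by
    rw [hlift (Ioo_subset_Icc_self hs), hlift (Ioo_subset_Icc_self ht)]
    simp only [show (∫ u in a..s, (logDeriv z u).im) = ∫ u in a..t, (logDeriv z u).im from hst]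
  have hθderiv : ∀ᵐ t ∂volume.restrict (Ioo a b),
      derivWithin θ (Ioo a b) t = (logDeriv z t).im := by
    rw [ae_restrict_iff' measurableSet_Ioo]
    filter_upwards [hint.ae_hasDerivAt_integral] with t hθt ht
    rw [derivWithin_of_isOpen isOpen_Ioo ht]
    exact (hθt (Icc_subset_uIcc (Ioo_subset_Icc_self ht)) a left_mem_uIcc).deriv
  refine (hθcont.strictMonoOn_of_injOn_Ioo hab hθinj).imp (fun hmono => ?_) fun hanti => ?_
  · exact hθderiv.mono fun t ht => ht ▸ hmono.monotoneOn.derivWithin_nonneg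
  · exact hθderiv.mono fun t ht => ht ▸ hanti.antitoneOn.derivWithin_nonpos

end Circle

/-- The `1`-form `λ₁ x dy - λ₂ y dx`, evaluated at the point `p` on the vector `v`. It calibrates
the problem: it is dominated by the integrand of `E_H`, and its integral over a closed curve is
`(λ₁ + λ₂) 𝒜`. -/
def calibration (l1 l2 : ℝ) (p v : ℝ × ℝ) : ℝ := l1 * p.1 * v.2 - l2 * p.2 * v.1

section Pointwise

variable (l1 l2 : ℝ) (p v : ℝ × ℝ)

lemma sq_FH_mul_enorm2 : (FH l1 l2 p * enorm2 v) ^ 2 =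
    calibration l1 l2 p v ^ 2 + (l1 * p.1 * v.1 + l2 * p.2 * v.2) ^ 2 := by
  rw [mul_pow, FH, enorm2, Real.sq_sqrt (by positivity), Real.sq_sqrt (by positivity), calibration]
  ring

lemma FH_mul_enorm2_nonneg : 0 ≤ FH l1 l2 p * enorm2 v :=
  mul_nonneg (Real.sqrt_nonneg _) (Real.sqrt_nonneg _)

lemma abs_calibration_le : |calibration l1 l2 p v| ≤ FH l1 l2 p * enorm2 v := by
  refine abs_le_of_sq_le_sq ?_ (FH_mul_enorm2_nonneg l1 l2 p v)
  rw [sq_FH_mul_enorm2]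
  exact le_add_of_nonneg_right (sq_nonneg _)

end Pointwise

lemma FH_mul_enorm2_eq_abs_calibration {l1 l2 : ℝ} {p v : ℝ × ℝ}
    (h : l1 * p.1 * v.1 + l2 * p.2 * v.2 = 0) :
    FH l1 l2 p * enorm2 v = |calibration l1 l2 p v| := by
  rw [← abs_of_nonneg (FH_mul_enorm2_nonneg l1 l2 p v), ← sq_eq_sq_iff_abs_eq_abs,
    sq_FH_mul_enorm2, h]
  ring

section ProdDeriv

variable {E F : Type*} [NormedAddCommGroup E] [NormedSpace ℝ E] [NormedAddCommGroup F]
  [NormedSpace ℝ F] {γ : ℝ → E × F} {t : ℝ}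

lemma hasDerivAt_fst_comp (hγ : DifferentiableAt ℝ γ t) :
    HasDerivAt (fun s => (γ s).1) (deriv γ t).1 t :=
  (ContinuousLinearMap.fst ℝ E F).hasFDerivAt.comp_hasDerivAt t hγ.hasDerivAt

lemma hasDerivAt_snd_comp (hγ : DifferentiableAt ℝ γ t) :
    HasDerivAt (fun s => (γ s).2) (deriv γ t).2 t :=
  (ContinuousLinearMap.snd ℝ E F).hasFDerivAt.comp_hasDerivAt t hγ.hasDerivAt

end ProdDeriv

section Integrals

variable {γ : ℝ → ℝ × ℝ} {a b : ℝ}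

lemma ellipse_tangency {l1 l2 t q : ℝ} (hγ : DifferentiableAt ℝ γ t)
    (hlevel : ∀ᶠ s in 𝓝 t, l1 * (γ s).1 ^ 2 + l2 * (γ s).2 ^ 2 = q) :
    l1 * (γ t).1 * (deriv γ t).1 + l2 * (γ t).2 * (deriv γ t).2 = 0 := by
  have hconst : HasDerivAt (fun s => l1 * (γ s).1 ^ 2 + l2 * (γ s).2 ^ 2) 0 t :=
    (hasDerivAt_const t q).congr_of_eventuallyEq hlevel
  have hderiv := (((hasDerivAt_fst_comp hγ).fun_pow 2).const_mul l1).add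
    (((hasDerivAt_snd_comp hγ).fun_pow 2).const_mul l2)
  have hzero := hderiv.unique hconst
  simp only [Nat.cast_ofNat, Nat.add_one_sub_one, pow_one] at hzero
  linarith

lemma ae_ellipse_tangency {l1 l2 q : ℝ} (hγ : LocallyLipschitz γ)
    (hlevel : ∀ t ∈ Icc a b, l1 * (γ t).1 ^ 2 + l2 * (γ t).2 ^ 2 = q) :
    ∀ᵐ t ∂volume.restrict (Ioo a b),
      l1 * (γ t).1 * (deriv γ t).1 + l2 * (γ t).2 * (deriv γ t).2 = 0 := by
  rw [ae_restrict_iff' measurableSet_Ioo]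
  filter_upwards [ae_differentiableAt_of_locallyLipschitz hγ] with t hγt ht
  exact ellipse_tangency hγt (eventually_of_mem (Icc_mem_nhds ht.1 ht.2) hlevel)

lemma intervalIntegrable_FH_mul_enorm2_deriv (hγ : LocallyLipschitz γ) (l1 l2 : ℝ) :
    IntervalIntegrable (fun t => FH l1 l2 (γ t) * enorm2 (deriv γ t)) volume a b := by
  have hF : Continuous fun t => FH l1 l2 (γ t) := by
    have := hγ.continuous
    unfold FH
    fun_prop
  have hderiv := intervalIntegrable_deriv_of_locallyLipschitz hγ a b
  have henorm (v : ℝ × ℝ) : enorm2 v = ‖Complex.equivRealProdCLM.symm v‖ := by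
    simp [enorm2, Complex.norm_eq_sqrt_sq_add_sq]
  simp only [henorm]
  let L : ℝ × ℝ →L[ℝ] ℂ := Complex.equivRealProdCLM.symm
  have hnorm : IntervalIntegrable (fun t => ‖L (deriv γ t)‖) volume a b :=
    ⟨(L.integrable_comp hderiv.1).norm, (L.integrable_comp hderiv.2).norm⟩
  exact hnorm.continuousOn_mul hF.continuousOn

lemma integral_calibration_deriv (hγ : LocallyLipschitz γ) (hclosed : γ a = γ b)
    (l1 l2 : ℝ) :
    ∫ t in a..b, calibration l1 l2 (γ t) (deriv γ t) = (l1 + l2) * sArea a b γ := by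
  have hfst := absolutelyContinuousOnInterval_of_locallyLipschitz
    (LipschitzWith.prod_fst.locallyLipschitz.comp hγ) a b
  have hsnd := absolutelyContinuousOnInterval_of_locallyLipschitz
    (LipschitzWith.prod_snd.locallyLipschitz.comp hγ) a b
  have hxdy := hsnd.intervalIntegrable_deriv.continuousOn_mul hfst.continuousOn
  have hydx := hfst.intervalIntegrable_deriv.mul_continuousOn hsnd.continuousOn
  have hparts := hfst.integral_mul_deriv_eq_deriv_mul hsnd
  simp only [Function.comp_def] at hxdy hydx hparts
  calc
    ∫ t in a..b, calibration l1 l2 (γ t) (deriv γ t)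
      = ∫ t in a..b, (l1 * ((γ t).1 * deriv (fun s => (γ s).2) t) -
          l2 * (deriv (fun s => (γ s).1) t * (γ t).2)) := by
        refine intervalIntegral.integral_congr_ae ?_
        filter_upwards [ae_differentiableAt_of_locallyLipschitz hγ] with t ht _
        rw [(hasDerivAt_fst_comp ht).deriv, (hasDerivAt_snd_comp ht).deriv, calibration]
        ring
    _ = l1 * sArea a b γ - l2 * ∫ t in a..b, deriv (fun s => (γ s).1) t * (γ t).2 := by
        rw [intervalIntegral.integral_sub (hxdy.const_mul l1) (hydx.const_mul l2),
          intervalIntegral.integral_const_mul, intervalIntegral.integral_const_mul, sArea]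
    _ = (l1 + l2) * sArea a b γ := by
        rw [hclosed] at hparts
        rw [sArea]
        linear_combination (-l2) * hparts

theorem abs_add_mul_sArea_le_degLen (hab : a ≤ b) (hγ : LocallyLipschitz γ)
    (hclosed : γ a = γ b) (l1 l2 : ℝ) :
    |(l1 + l2) * sArea a b γ| ≤ degLen (FH l1 l2) a b γ := by
  rw [← integral_calibration_deriv hγ hclosed]
  exact intervalIntegral.norm_integral_le_of_norm_le
    (f := fun t => calibration l1 l2 (γ t) (deriv γ t)) hab
    (.of_forall fun t _ => abs_calibration_le l1 l2 (γ t) (deriv γ t))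
    (intervalIntegrable_FH_mul_enorm2_deriv hγ l1 l2)

end Integrals

/-- The linear map `(x, y) ↦ √λ₁ x + i √λ₂ y`, which carries the ellipses `λ₁ x² + λ₂ y² = r²`
to the circles `|z| = r` in the complex plane. -/
def ellipseToCircle (l1 l2 : ℝ) : ℝ × ℝ →L[ℝ] ℂ :=
  (Complex.equivRealProdCLM.symm : ℝ × ℝ →L[ℝ] ℂ).comp
    ((√l1 • ContinuousLinearMap.fst ℝ ℝ ℝ).prod (√l2 • ContinuousLinearMap.snd ℝ ℝ ℝ))

section Ellipse

variable {l1 l2 : ℝ}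

lemma ellipseToCircle_re (p : ℝ × ℝ) : (ellipseToCircle l1 l2 p).re = √l1 * p.1 := by
  simp [ellipseToCircle]

lemma ellipseToCircle_im (p : ℝ × ℝ) : (ellipseToCircle l1 l2 p).im = √l2 * p.2 := by
  simp [ellipseToCircle]

lemma ellipseToCircle_injective (hl1 : 0 < l1) (hl2 : 0 < l2) :
    Function.Injective (ellipseToCircle l1 l2) := fun p q h => by
  have hre := congrArg Complex.re h
  have him := congrArg Complex.im h
  simp only [ellipseToCircle_re, ellipseToCircle_im] at hre him
  exact Prod.ext (mul_left_cancel₀ (Real.sqrt_ne_zero'.2 hl1) hre)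
    (mul_left_cancel₀ (Real.sqrt_ne_zero'.2 hl2) him)

lemma norm_ellipseToCircle (hl1 : 0 ≤ l1) (hl2 : 0 ≤ l2) (p : ℝ × ℝ) :
    ‖ellipseToCircle l1 l2 p‖ = √(l1 * p.1 ^ 2 + l2 * p.2 ^ 2) := by
  rw [Complex.norm_eq_sqrt_sq_add_sq, ellipseToCircle_re, ellipseToCircle_im, mul_pow, mul_pow,
    Real.sq_sqrt hl1, Real.sq_sqrt hl2]

lemma sqrt_mul_sqrt_mul_calibration (hl1 : 0 ≤ l1) (hl2 : 0 ≤ l2) {p v : ℝ × ℝ}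
    (hp : ellipseToCircle l1 l2 p ≠ 0) (htan : l1 * p.1 * v.1 + l2 * p.2 * v.2 = 0) :
    √l1 * √l2 * calibration l1 l2 p v =
      FH l1 l2 p ^ 2 * (ellipseToCircle l1 l2 v / ellipseToCircle l1 l2 p).im := by
  have hQ : Complex.normSq (ellipseToCircle l1 l2 p) = l1 * p.1 ^ 2 + l2 * p.2 ^ 2 := by
    rw [Complex.normSq_eq_norm_sq, norm_ellipseToCircle hl1 hl2, Real.sq_sqrt (by positivity)]
  have hQ0 : l1 * p.1 ^ 2 + l2 * p.2 ^ 2 ≠ 0 := hQ ▸ (Complex.normSq_pos.2 hp).ne'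
  rw [Complex.div_im, hQ, FH, Real.sq_sqrt (by positivity), calibration]
  simp only [ellipseToCircle_re, ellipseToCircle_im]
  field_simp
  linear_combination (√l1 * √l2 * p.1 * p.2 * (l1 - l2)) * htan

variable {γ : ℝ → ℝ × ℝ}

lemma deriv_ellipseToCircle_comp {t : ℝ} (hγ : DifferentiableAt ℝ γ t) :
    deriv (fun s => ellipseToCircle l1 l2 (γ s)) t = ellipseToCircle l1 l2 (deriv γ t) :=
  ((ellipseToCircle l1 l2).hasFDerivAt.comp_hasDerivAt t hγ.hasDerivAt).deriv

variable {a b q : ℝ}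

lemma ae_calibration_nonneg_or_nonpos_of_injOn (hl1 : 0 < l1) (hl2 : 0 < l2)
    (hγ : LocallyLipschitz γ) (hq : 0 < q)
    (hlevel : ∀ t ∈ Icc a b, l1 * (γ t).1 ^ 2 + l2 * (γ t).2 ^ 2 = q)
    (hinj : InjOn γ (Ioo a b)) :
    (∀ᵐ t ∂volume.restrict (Ioo a b), 0 ≤ calibration l1 l2 (γ t) (deriv γ t)) ∨
      ∀ᵐ t ∂volume.restrict (Ioo a b), calibration l1 l2 (γ t) (deriv γ t) ≤ 0 := by
  set z : ℝ → ℂ := fun t => ellipseToCircle l1 l2 (γ t)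
  have hnorm : ∀ t ∈ Icc a b, ‖z t‖ = √q := fun t ht => by
    rw [norm_ellipseToCircle hl1.le hl2.le, hlevel t ht]
  have hturn := ae_im_logDeriv_nonneg_or_nonpos_of_injOn
    ((ellipseToCircle l1 l2).lipschitz.locallyLipschitz.comp hγ) (Real.sqrt_ne_zero'.2 hq) hnorm
    ((ellipseToCircle_injective hl1 hl2).comp_injOn hinj)
  have hcal : ∀ᵐ t ∂volume.restrict (Ioo a b), √l1 * √l2 * calibration l1 l2 (γ t) (deriv γ t) =
      FH l1 l2 (γ t) ^ 2 * (logDeriv z t).im := by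
    filter_upwards [ae_ellipse_tangency hγ hlevel, ae_restrict_mem measurableSet_Ioo,
      ae_restrict_of_ae (ae_differentiableAt_of_locallyLipschitz hγ)] with t htan ht hγt
    have hz0 : z t ≠ 0 := norm_ne_zero_iff.1 <| by
      rw [hnorm t (Ioo_subset_Icc_self ht)]
      exact Real.sqrt_ne_zero'.2 hq
    rw [logDeriv_apply, deriv_ellipseToCircle_comp hγt]
    exact sqrt_mul_sqrt_mul_calibration hl1.le hl2.le hz0 htan
  have hs : 0 < √l1 * √l2 := by positivity
  refine hturn.imp (fun hturn => ?_) fun hturn => ?_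
  · filter_upwards [hcal, hturn] with t hcal hturn
    exact nonneg_of_mul_nonneg_right (hcal ▸ by positivity) hs
  · filter_upwards [hcal, hturn] with t hcal hturn
    exact nonpos_of_mul_nonpos_right (hcal ▸ mul_nonpos_of_nonneg_of_nonpos (sq_nonneg _) hturn) hs

theorem degLen_eq_abs_add_mul_sArea_of_ellipse (hl1 : 0 < l1) (hl2 : 0 < l2) (hab : a ≤ b)
    (hγ : LocallyLipschitz γ) (hclosed : γ a = γ b) (hq : 0 < q)
    (hlevel : ∀ t ∈ Icc a b, l1 * (γ t).1 ^ 2 + l2 * (γ t).2 ^ 2 = q)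
    (hinj : InjOn γ (Ioo a b)) :
    degLen (FH l1 l2) a b γ = |(l1 + l2) * sArea a b γ| := by
  rw [← integral_calibration_deriv hγ hclosed, degLen, intervalIntegral.integral_of_le hab,
    intervalIntegral.integral_of_le hab, integral_Ioc_eq_integral_Ioo, integral_Ioc_eq_integral_Ioo,
    ← integral_abs_eq_abs_integral_of_ae_nonneg_or_nonpos
      (ae_calibration_nonneg_or_nonpos_of_injOn hl1 hl2 hγ hq hlevel hinj)]
  refine integral_congr_ae ?_
  filter_upwards [ae_ellipse_tangency hγ hlevel] with t htan
  exact FH_mul_enorm2_eq_abs_calibration htan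

lemma mul_sq_add_mul_sq_pos (hl1 : 0 < l1) (hl2 : 0 < l2) {p : ℝ × ℝ} (hp : p ≠ 0) :
    0 < l1 * p.1 ^ 2 + l2 * p.2 ^ 2 := by
  rw [← Real.sqrt_pos, ← norm_ellipseToCircle hl1.le hl2.le, norm_pos_iff]
  exact (map_ne_zero_iff _ (ellipseToCircle_injective hl1 hl2)).2 hp

end Ellipse

theorem ellipse_isoperimetric_general {l1 l2 : ℝ} (hl1 : 0 < l1) (hl2 : 0 < l2) {p0 : ℝ × ℝ}
    (hp0 : p0 ≠ 0) {a b : ℝ} {γ : ℝ → ℝ × ℝ} (hγ : IsCurve a b γ p0 p0) :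
    (l1 + l2) * |sArea a b γ| ≤ degLen (FH l1 l2) a b γ ∧
      (InjOn γ (Ioo a b) →
        MapsTo γ (Icc a b) { p | (1 / 2) * (l1 * p.1 ^ 2 + l2 * p.2 ^ 2) =
          (1 / 2) * (l1 * p0.1 ^ 2 + l2 * p0.2 ^ 2) } →
        degLen (FH l1 l2) a b γ = (l1 + l2) * |sArea a b γ|) := by
  obtain ⟨hab, hLip, ha, hb⟩ := hγ
  have hclosed : γ a = γ b := ha.trans hb.symm
  rw [← abs_of_pos (add_pos hl1 hl2), ← abs_mul]
  exact ⟨abs_add_mul_sArea_le_degLen hab hLip hclosed l1 l2, fun hinj hlevel =>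
    degLen_eq_abs_add_mul_sArea_of_ellipse hl1 hl2 hab hLip hclosed
      (mul_sq_add_mul_sq_pos hl1 hl2 hp0)
      (fun t ht => mul_left_cancel₀ one_half_pos.ne' (hlevel ht)) hinj⟩

/-- the ellipse `½(λ₁p₁² + λ₂p₂²) = c` through `p₀`, enclosing Euclidean area
`A = 2πc/√(λ₁λ₂)`, minimizes `E_H` among closed curves through `p₀` enclosing area `A`:
every such curve has `E_H ≥ (λ₁+λ₂)A`, and any positively oriented locally Lipschitz
parametrization of the ellipse attains equality. -/
theorem ellipse_isoperimetric (l1 l2 : ℝ) (hl1 : 0 < l1) (hl2 : 0 < l2)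
    (p0 : ℝ × ℝ) (hp0 : p0 ≠ (0, 0)) (c A : ℝ)
    (hc : c = (1 / 2) * (l1 * p0.1 ^ 2 + l2 * p0.2 ^ 2))
    (hA : A = 2 * Real.pi * c / Real.sqrt (l1 * l2)) :
    (∀ a b γ, IsCurve a b γ p0 p0 → sArea a b γ = A →
      (l1 + l2) * A ≤ degLen (FH l1 l2) a b γ) ∧
    (∀ a b γ, IsCurve a b γ p0 p0 → sArea a b γ = A →
      Set.InjOn γ (Set.Ico a b) →
      γ '' Set.Icc a b = { p : ℝ × ℝ | (1 / 2) * (l1 * p.1 ^ 2 + l2 * p.2 ^ 2) = c } →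
      degLen (FH l1 l2) a b γ = (l1 + l2) * A) := by
  have hA_abs : |A| = A := abs_of_nonneg (by rw [hA, hc]; positivity)
  refine ⟨fun a b γ hγ harea => ?_, fun a b γ hγ harea hinj himage => ?_⟩
  · simpa only [harea, hA_abs] using (ellipse_isoperimetric_general hl1 hl2 hp0 hγ).1
  · simpa only [harea, hA_abs] using (ellipse_isoperimetric_general hl1 hl2 hp0 hγ).2
      (hinj.mono Ioo_subset_Ico_self) (mapsTo_iff_image_subset.2 (himage.trans (hc ▸ rfl)).subset)
end
end

section
/- Let b ∈ ℝ and let γ = (γ¹,γ²) : [0,1] → ℝ² be locally Lipschitz with 1 + b|γ(t)|² ≥ 0 for all t. Define R(t) := |γ(t)|² and α(t) := 2∫₀ᵗ (γ¹(s)(γ²)'(s) − γ²(s)(γ¹)'(s)) ds. Then the degenerate length of γ for the radial conformal factor √(r² + b r⁴) equals the length of the planar curve (R,α) in the conformal metric with factor √(1+bR)/2: ∫₀¹ √(|γ(t)|² + b|γ(t)|⁴) |γ'(t)| dt = ∫₀¹ (√(1 + bR(t))/2) √(R'(t)² + α'(t)²) dt. -/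
open MeasureTheory Set Filter Topology
open scoped ENNReal

noncomputable section

/-!
Identify the plane with `ℂ`, and write `R` for the squared radius and `α` for four times the swept
area. Then `R' + i α' = 2 γ̄ γ'` almost everywhere, and taking absolute values gives
`√(R'² + α'²) = 2 |γ| |γ'|`: the factor `|γ|`, which degenerates at the origin, is absorbed by the
new coordinates.
-/

theorem enorm2_sq (v : ℝ × ℝ) : enorm2 v ^ 2 = v.1 ^ 2 + v.2 ^ 2 :=
  Real.sq_sqrt (by positivity)

theorem enorm2_nonneg (v : ℝ × ℝ) : 0 ≤ enorm2 v :=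
  Real.sqrt_nonneg _

theorem sqrt_dot_sq_add_cross_sq (v w : ℝ × ℝ) :
    √((v.1 * w.1 + v.2 * w.2) ^ 2 + (v.1 * w.2 - v.2 * w.1) ^ 2) = enorm2 v * enorm2 w := by
  rw [enorm2, enorm2, ← Real.sqrt_mul (by positivity)]
  congr 1
  ring

theorem sqrt_sq_add_mul_pow_four {b r : ℝ} (hr : 0 ≤ r) (hb : 0 ≤ 1 + b * r ^ 2) :
    √(r ^ 2 + b * r ^ 4) = √(1 + b * r ^ 2) * r := by
  rw [show r ^ 2 + b * r ^ 4 = (1 + b * r ^ 2) * r ^ 2 by ring, Real.sqrt_mul hb, Real.sqrt_sq hr]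

theorem boundedVariationOn_uIcc_of_locallyLipschitz {E : Type*} [PseudoMetricSpace E]
    {f : ℝ → E} (hf : LocallyLipschitz f) (a c : ℝ) : BoundedVariationOn f (uIcc a c) := by
  obtain ⟨K, hK⟩ : ∃ K, LipschitzOnWith K f (uIcc a c) :=
    hf.locallyLipschitzOn.exists_lipschitzOnWith_of_compact isCompact_uIcc
  have hbv := hK.locallyBoundedVariationOn _ _
    (left_mem_Icc.2 inf_le_sup) (right_mem_Icc.2 inf_le_sup)
  rwa [uIcc, inter_self] at hbv

section

variable {𝕜 E F : Type*} [NontriviallyNormedField 𝕜] [NormedAddCommGroup E] [NormedSpace 𝕜 E]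
  [NormedAddCommGroup F] [NormedSpace 𝕜 F] {f : 𝕜 → E × F} {f' : E × F} {t : 𝕜}

theorem hasDerivAt_fst_comp_s10 (h : HasDerivAt f f' t) : HasDerivAt (fun s => (f s).1) f'.1 t :=
  (ContinuousLinearMap.fst 𝕜 E F).hasFDerivAt.comp_hasDerivAt t h

theorem hasDerivAt_snd_comp_s10 (h : HasDerivAt f f' t) : HasDerivAt (fun s => (f s).2) f'.2 t :=
  (ContinuousLinearMap.snd 𝕜 E F).hasFDerivAt.comp_hasDerivAt t h

end

/-- Four times the area `∫ ½ r² dθ` swept by the radius vector of `γ` from time `a` to time `t`,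
written in Cartesian coordinates through `r² dθ = x dy - y dx`. The factor four makes its derivative
the imaginary part of `2 γ̄ γ'`, whose real part is the derivative of `|γ|²`. -/
def quadruplePolarArea (γ : ℝ → ℝ × ℝ) (a t : ℝ) : ℝ :=
  2 * ∫ s in a..t,
    ((γ s).1 * deriv (fun u => (γ u).2) s - (γ s).2 * deriv (fun u => (γ u).1) s)

section

variable {γ : ℝ → ℝ × ℝ}

theorem hasDerivAt_enorm2_sq {γ' : ℝ × ℝ} {t : ℝ} (h : HasDerivAt γ γ' t) :
    HasDerivAt (fun s => enorm2 (γ s) ^ 2) (2 * ((γ t).1 * γ'.1 + (γ t).2 * γ'.2)) t := by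
  simp only [enorm2_sq]
  have hfst := (hasDerivAt_fst_comp_s10 h).fun_pow 2
  have hsnd := (hasDerivAt_snd_comp_s10 h).fun_pow 2
  exact (hfst.fun_add hsnd).congr_deriv (by push_cast; ring)

variable {a c : ℝ}

theorem intervalIntegrable_cross_deriv (hcont : ContinuousOn γ (uIcc a c))
    (hbv : BoundedVariationOn γ (uIcc a c)) :
    IntervalIntegrable
      (fun s => (γ s).1 * deriv (fun u => (γ u).2) s - (γ s).2 * deriv (fun u => (γ u).1) s)
      volume a c := by
  have fst_bv : BoundedVariationOn (fun u => (γ u).1) (uIcc a c) :=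
    LipschitzWith.prod_fst.comp_boundedVariationOn hbv
  have snd_bv : BoundedVariationOn (fun u => (γ u).2) (uIcc a c) :=
    LipschitzWith.prod_snd.comp_boundedVariationOn hbv
  exact (snd_bv.intervalIntegrable_deriv.continuousOn_mul hcont.fst).sub
    (fst_bv.intervalIntegrable_deriv.continuousOn_mul hcont.snd)

theorem ae_hasDerivAt_quadruplePolarArea (hcont : ContinuousOn γ (uIcc a c))
    (hbv : BoundedVariationOn γ (uIcc a c)) :
    ∀ᵐ t, t ∈ uIcc a c → HasDerivAt (quadruplePolarArea γ a)
      (2 * ((γ t).1 * (deriv γ t).2 - (γ t).2 * (deriv γ t).1)) t := by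
  filter_upwards [hbv.ae_differentiableAt_of_mem_uIcc,
    (intervalIntegrable_cross_deriv hcont hbv).ae_hasDerivAt_integral] with t hdiff hint ht
  have hγ := (hdiff ht).hasDerivAt
  rw [← (hasDerivAt_fst_comp_s10 hγ).deriv, ← (hasDerivAt_snd_comp_s10 hγ).deriv]
  exact (hint ht a left_mem_uIcc).const_mul 2

theorem ae_sqrt_deriv_enorm2_sq_sq_add_deriv_quadruplePolarArea_sq
    (hcont : ContinuousOn γ (uIcc a c)) (hbv : BoundedVariationOn γ (uIcc a c)) :
    ∀ᵐ t, t ∈ uIcc a c →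
      √(deriv (fun s => enorm2 (γ s) ^ 2) t ^ 2 + deriv (quadruplePolarArea γ a) t ^ 2) =
        2 * (enorm2 (γ t) * enorm2 (deriv γ t)) := by
  filter_upwards [hbv.ae_differentiableAt_of_mem_uIcc,
    ae_hasDerivAt_quadruplePolarArea hcont hbv] with t hdiff harea ht
  rw [(hasDerivAt_enorm2_sq (hdiff ht).hasDerivAt).deriv, (harea ht).deriv, mul_pow, mul_pow,
    ← mul_add, Real.sqrt_mul (by positivity), Real.sqrt_sq zero_le_two, sqrt_dot_sq_add_cross_sq]

theorem desingularization_identity_general (F : ℝ × ℝ → ℝ) (hcont : ContinuousOn γ (uIcc a c))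
    (hbv : BoundedVariationOn γ (uIcc a c)) :
    degLen (fun v => F v * enorm2 v) a c γ =
      ∫ t in a..c, F (γ t) / 2 *
        √(deriv (fun s => enorm2 (γ s) ^ 2) t ^ 2 + deriv (quadruplePolarArea γ a) t ^ 2) := by
  refine intervalIntegral.integral_congr_ae ?_
  filter_upwards [ae_sqrt_deriv_enorm2_sq_sq_add_deriv_quadruplePolarArea_sq hcont hbv]
    with t hspeed ht
  rw [hspeed (uIoc_subset_uIcc ht)]
  ring

end

/-- the change of variables `R = |γ|²`, `α = 4 × (polar area)` turns the
degenerate length for the radial conformal factor `√(r² + b r⁴)` into the length of the planar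
curve `(R,α)` with conformal factor `√(1+bR)/2`. -/
theorem desingularization_identity (b : ℝ) (γ : ℝ → ℝ × ℝ) (hγ : LocallyLipschitz γ)
    (hpos : ∀ t ∈ Set.Icc (0:ℝ) 1, 0 ≤ 1 + b * enorm2 (γ t) ^ 2)
    (R α : ℝ → ℝ)
    (hR : R = fun t => enorm2 (γ t) ^ 2)
    (hα : α = fun t => 2 * ∫ s in (0:ℝ)..t,
      ((γ s).1 * deriv (fun u => (γ u).2) s - (γ s).2 * deriv (fun u => (γ u).1) s)) :
    (∫ t in (0:ℝ)..1, Real.sqrt (enorm2 (γ t) ^ 2 + b * enorm2 (γ t) ^ 4) * enorm2 (deriv γ t))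
      = ∫ t in (0:ℝ)..1,
          (Real.sqrt (1 + b * R t) / 2) * Real.sqrt (deriv R t ^ 2 + deriv α t ^ 2) := by
  subst hR hα
  rw [← uIcc_of_le zero_le_one] at hpos
  calc ∫ t in (0:ℝ)..1, √(enorm2 (γ t) ^ 2 + b * enorm2 (γ t) ^ 4) * enorm2 (deriv γ t)
      = degLen (fun v => √(1 + b * enorm2 v ^ 2) * enorm2 v) 0 1 γ :=
        intervalIntegral.integral_congr fun t ht => by
          simp only [sqrt_sq_add_mul_pow_four (enorm2_nonneg _) (hpos t ht)]
    _ = _ := desingularization_identity_general (fun v => √(1 + b * enorm2 v ^ 2))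
        hγ.continuous.continuousOn (boundedVariationOn_uIcc_of_locallyLipschitz hγ 0 1)
end
end

section
/- Let b > 0 and r₀ > 0, and define the spiral σ : (0, r₀] → ℝ² by σ(r) := (r cos(1/(√b · r)), r sin(1/(√b · r))). Then σ has infinite Euclidean arclength, ∫₀^{r₀} |σ'(r)| dr = +∞, while its degenerate length with respect to the conformal factor √(r² + b r⁴) is finite: ∫₀^{r₀} √(|σ(r)|² + b|σ(r)|⁴) |σ'(r)| dr < ∞. -/
open MeasureTheory Set Filter Topology
open scoped ENNReal

noncomputable section

/-!
In polar coordinates a curve `(ρ, θ)` has speed `√(ρ'² + (ρ θ')²)`, so the spiral, with `ρ = r` and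
`θ = 1 / (√b r)`, has speed `√(1 + 1 / (b r²)) ≥ 1 / (√b r)`, which is not integrable at `0`. The
conformal factor `r √(1 + b r²)` cancels this singularity exactly: its product with the speed is the
polynomial `(1 + b r²) / √b`.
-/

/-- The planar curve with polar coordinates `(ρ t, θ t)` at time `t`; the radius `ρ` may be
negative. -/
def polarCurve (ρ θ : ℝ → ℝ) (t : ℝ) : ℝ × ℝ :=
  (ρ t * Real.cos (θ t), ρ t * Real.sin (θ t))

lemma enorm2_polarCurve (ρ θ : ℝ → ℝ) (t : ℝ) : enorm2 (polarCurve ρ θ t) = |ρ t| := by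
  rw [enorm2, ← Real.sqrt_sq_eq_abs]
  congr 1
  simp only [polarCurve]
  linear_combination ρ t ^ 2 * Real.cos_sq_add_sin_sq (θ t)

lemma hasDerivAt_polarCurve {ρ θ : ℝ → ℝ} {ρ' θ' t : ℝ} (hρ : HasDerivAt ρ ρ' t)
    (hθ : HasDerivAt θ θ' t) :
    HasDerivAt (polarCurve ρ θ)
      (ρ' * Real.cos (θ t) + ρ t * (-Real.sin (θ t) * θ'),
        ρ' * Real.sin (θ t) + ρ t * (Real.cos (θ t) * θ')) t :=
  (hρ.fun_mul hθ.cos).prodMk (hρ.fun_mul hθ.sin)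

lemma enorm2_deriv_polarCurve {ρ θ : ℝ → ℝ} {ρ' θ' t : ℝ} (hρ : HasDerivAt ρ ρ' t)
    (hθ : HasDerivAt θ θ' t) :
    enorm2 (deriv (polarCurve ρ θ) t) = √(ρ' ^ 2 + (ρ t * θ') ^ 2) := by
  rw [(hasDerivAt_polarCurve hρ hθ).deriv, enorm2]
  congr 1
  linear_combination (ρ' ^ 2 + (ρ t * θ') ^ 2) * Real.cos_sq_add_sin_sq (θ t)

lemma hasDerivAt_one_div_const_mul {𝕜 : Type*} [NontriviallyNormedField 𝕜] {c x : 𝕜}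
    (hc : c ≠ 0) (hx : x ≠ 0) :
    HasDerivAt (fun x ↦ 1 / (c * x)) (-1 / (c * x ^ 2)) x := by
  refine ((hasDerivAt_const x 1).fun_div (hasDerivAt_const_mul c)
    (mul_ne_zero hc hx)).congr_deriv ?_
  field_simp
  ring

lemma setLIntegral_Ioc_ofReal_inv_sub_left_eq_top {a b : ℝ} (hab : a < b) :
    ∫⁻ x in Ioc a b, ENNReal.ofReal (x - a)⁻¹ = ⊤ := by
  have not_integrable : ¬ IntegrableOn (fun x ↦ (x - a)⁻¹) (Ioc a b) := by
    rw [← intervalIntegrable_iff_integrableOn_Ioc_of_le hab.le, intervalIntegrable_sub_inv_iff]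
    simp [hab.ne]
  have integrand_nonneg : 0 ≤ᵐ[volume.restrict (Ioc a b)] fun x ↦ (x - a)⁻¹ :=
    ae_restrict_of_forall_mem measurableSet_Ioc fun x hx ↦ inv_nonneg.2 (sub_nonneg.2 hx.1.le)
  by_contra finite
  exact not_integrable ((lintegral_ofReal_ne_top_iff_integrable (by fun_prop)
    integrand_nonneg).1 finite)

lemma setLIntegral_Ioc_ofReal_eq_top_of_mul_inv_sub_left_le {a b c : ℝ} {f : ℝ → ℝ} (hab : a < b)
    (hc : 0 < c) (hf : ∀ x ∈ Ioc a b, c * (x - a)⁻¹ ≤ f x) :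
    ∫⁻ x in Ioc a b, ENNReal.ofReal (f x) = ⊤ := by
  refine top_unique ?_
  calc
    ⊤ = ENNReal.ofReal c * ∫⁻ x in Ioc a b, ENNReal.ofReal (x - a)⁻¹ := by
      rw [setLIntegral_Ioc_ofReal_inv_sub_left_eq_top hab,
        ENNReal.mul_top (ENNReal.ofReal_pos.2 hc).ne']
    _ = ∫⁻ x in Ioc a b, ENNReal.ofReal (c * (x - a)⁻¹) := by
      simp_rw [ENNReal.ofReal_mul hc.le]
      exact (lintegral_const_mul _ (by fun_prop)).symm
    _ ≤ ∫⁻ x in Ioc a b, ENNReal.ofReal (f x) :=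
      setLIntegral_mono' measurableSet_Ioc fun x hx ↦ ENNReal.ofReal_le_ofReal (hf x hx)

/-- The conformal factor `F(p) = √(|p|² + b |p|⁴)` weighting the degenerate length. -/
def conformalFactor (b : ℝ) (p : ℝ × ℝ) : ℝ :=
  √(enorm2 p ^ 2 + b * enorm2 p ^ 4)

/-- The hyperbolic spiral `r θ = 1 / s`, parametrized by its radius `r`; it is the spiral of the
theorem for `s = √b`. At `r = 0` it takes the value `0`. -/
def hyperbolicSpiral (s : ℝ) : ℝ → ℝ × ℝ :=
  polarCurve (fun r ↦ r) fun r ↦ 1 / (s * r)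

section HyperbolicSpiral

variable {s r : ℝ}

lemma enorm2_hyperbolicSpiral (s r : ℝ) : enorm2 (hyperbolicSpiral s r) = |r| :=
  enorm2_polarCurve _ _ r

lemma enorm2_deriv_hyperbolicSpiral (hs : s ≠ 0) (hr : r ≠ 0) :
    enorm2 (deriv (hyperbolicSpiral s) r) = √(1 + (1 / (s * r)) ^ 2) := by
  rw [hyperbolicSpiral,
    enorm2_deriv_polarCurve (hasDerivAt_id' r) (hasDerivAt_one_div_const_mul hs hr)]
  congr 1
  field_simp

lemma inv_abs_mul_inv_abs_le_enorm2_deriv_hyperbolicSpiral (hs : s ≠ 0) (hr : r ≠ 0) :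
    |s|⁻¹ * |r|⁻¹ ≤ enorm2 (deriv (hyperbolicSpiral s) r) := by
  rw [enorm2_deriv_hyperbolicSpiral hs hr, ← mul_inv, ← abs_mul, ← abs_inv, ← one_div]
  exact Real.abs_le_sqrt (le_add_of_nonneg_left zero_le_one)

lemma conformalFactor_mul_enorm2_deriv_hyperbolicSpiral (hs : s ≠ 0) (hr : r ≠ 0) :
    conformalFactor (s ^ 2) (hyperbolicSpiral s r) * enorm2 (deriv (hyperbolicSpiral s) r) =
      (1 + s ^ 2 * r ^ 2) / |s| := by
  have perfect_square : (r ^ 2 + s ^ 2 * r ^ 4) * (1 + (1 / (s * r)) ^ 2) =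
      ((1 + s ^ 2 * r ^ 2) / |s|) ^ 2 := by
    rw [div_pow _ |s|, sq_abs]
    field_simp
    ring
  rw [conformalFactor, enorm2_hyperbolicSpiral, enorm2_deriv_hyperbolicSpiral hs hr, sq_abs,
    Even.pow_abs (n := 4) (by decide), ← Real.sqrt_mul (by positivity), perfect_square,
    Real.sqrt_sq (by positivity)]

theorem setLIntegral_Ioc_enorm2_deriv_hyperbolicSpiral_eq_top {r₀ : ℝ} (hs : s ≠ 0)
    (hr₀ : 0 < r₀) :
    ∫⁻ r in Ioc 0 r₀, ENNReal.ofReal (enorm2 (deriv (hyperbolicSpiral s) r)) = ⊤ := by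
  refine setLIntegral_Ioc_ofReal_eq_top_of_mul_inv_sub_left_le hr₀
    (inv_pos.2 (abs_pos.2 hs)) fun r hr ↦ ?_
  simpa only [sub_zero, abs_of_pos hr.1] using
    inv_abs_mul_inv_abs_le_enorm2_deriv_hyperbolicSpiral hs hr.1.ne'

theorem intervalIntegrable_conformalFactor_mul_enorm2_deriv_hyperbolicSpiral (hs : s ≠ 0)
    (r₁ r₂ : ℝ) :
    IntervalIntegrable
      (fun r ↦ conformalFactor (s ^ 2) (hyperbolicSpiral s r) *
        enorm2 (deriv (hyperbolicSpiral s) r))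
      volume r₁ r₂ := by
  have polynomial_integrable :
      IntervalIntegrable (fun r ↦ (1 + s ^ 2 * r ^ 2) / |s|) volume r₁ r₂ :=
    Continuous.intervalIntegrable (by fun_prop) _ _
  refine polynomial_integrable.congr_ae (ae_restrict_of_ae ?_)
  filter_upwards [Measure.ae_ne volume 0] with r hr
  exact (conformalFactor_mul_enorm2_deriv_hyperbolicSpiral hs hr).symm

end HyperbolicSpiral

/-- the limiting minimizing spiral `σ(r) = (r cos(1/(√b r)), r sin(1/(√b r)))`
has infinite Euclidean arclength on `(0, r₀]`, yet finite degenerate length with respect to the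
conformal factor `√(r² + b r⁴)`. -/
theorem spiral_infinite_euclidean_finite_degenerate (b r0 : ℝ) (hb : 0 < b) (hr0 : 0 < r0)
    (σ : ℝ → ℝ × ℝ)
    (hσ : σ = fun r =>
      (r * Real.cos (1 / (Real.sqrt b * r)), r * Real.sin (1 / (Real.sqrt b * r)))) :
    (∫⁻ r in Set.Ioc (0:ℝ) r0, ENNReal.ofReal (enorm2 (deriv σ r))) = ⊤ ∧
    IntervalIntegrable
      (fun r => Real.sqrt (enorm2 (σ r) ^ 2 + b * enorm2 (σ r) ^ 4) * enorm2 (deriv σ r))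
      volume 0 r0 := by
  have hs : √b ≠ 0 := (Real.sqrt_pos.2 hb).ne'
  obtain rfl : σ = hyperbolicSpiral √b := hσ
  refine ⟨setLIntegral_Ioc_enorm2_deriv_hyperbolicSpiral_eq_top hs hr0, ?_⟩
  simpa only [conformalFactor, Real.sq_sqrt hb.le] using
    intervalIntegrable_conformalFactor_mul_enorm2_deriv_hyperbolicSpiral hs 0 r0
end
end
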